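/- For every partition λ and all z, z' ∈ ℂ: Σ_{□ addable to λ} (z + c(□))(z' + c(□)) − Σ_{□ removable from λ} (z + c(□))(z' + c(□)) = zz' + 2|λ|, where the first sum is over all squares □ that can be added to λ to give a partition, and the second sum is over all squares □ that can be removed from λ to give a partition. -/

import Mathlib

open scoped Classical

noncomputable section

/-- The content of a cell `c = (i, j)` (0-indexed row `i` and column `j`) of a Young diagram:
`c(□) = column(□) - row(□)`. -/
def cellContent (c : ℕ × ℕ) : ℤ := (c.2 : ℤ) - (c.1 : ℤ)

/-- The hook length of the cell `c = (i, j)` of the Young diagram `Y`: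
`h(□) = λ_i - j + λ'_j - i - 1` in 0-indexed coordinates. -/
def hookLen (Y : YoungDiagram) (c : ℕ × ℕ) : ℕ :=
  (Y.rowLen c.1 - c.2) + (Y.colLen c.2 - c.1) - 1

/-- The product `Π_{□ ∈ λ} (z + c(□)) (z' + c(□)) / h(□)²`. -/
def zWeight (z z' : ℂ) (Y : YoungDiagram) : ℂ :=
  ∏ c ∈ Y.cells, ((z + cellContent c) * (z' + cellContent c) / (hookLen Y c : ℂ) ^ 2)

/-- The finset of squares addable to the Young diagram `Y`: cells `c ∉ Y` such that
adding `c` to `Y` again yields a Young diagram, i.e. every strictly smaller cell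
(in the product order) already belongs to `Y`.  Any such cell has the form
`(i, Y.rowLen i)` for some `i ≤ Y.colLen 0`. -/
def addables (Y : YoungDiagram) : Finset (ℕ × ℕ) :=
  ((Finset.range (Y.colLen 0 + 1)).image fun i => (i, Y.rowLen i)).filter
    fun c => ∀ d : ℕ × ℕ, d ≤ c → d ≠ c → d ∈ Y.cells

/-- Add a square to a Young diagram (when the result is again a Young diagram;
junk value `Y` otherwise). -/
def addBox (Y : YoungDiagram) (c : ℕ × ℕ) : YoungDiagram :=
  if h : c ∉ Y.cells ∧ ∀ d : ℕ × ℕ, d ≤ c → d ≠ c → d ∈ Y.cells then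
    { cells := insert c Y.cells,
      isLowerSet := by
        intro a b hba ha
        simp only [Finset.coe_insert, Set.mem_insert_iff, Finset.mem_coe] at ha ⊢
        rcases ha with rfl | ha
        · by_cases hbc : b = a
          · exact Or.inl hbc
          · exact Or.inr (h.2 b hba hbc)
        · exact Or.inr (Y.isLowerSet hba ha) }
  else Y

/-- The finset of squares removable from the Young diagram `Y`: the corners of `Y`. -/
def removables (Y : YoungDiagram) : Finset (ℕ × ℕ) :=
  Y.cells.filter fun c => (c.1 + 1, c.2) ∉ Y.cells ∧ (c.1, c.2 + 1) ∉ Y.cells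

/-- Remove a square from a Young diagram (when the result is again a Young diagram;
junk value `Y` otherwise). -/
def removeBox (Y : YoungDiagram) (c : ℕ × ℕ) : YoungDiagram :=
  if h : (c.1 + 1, c.2) ∉ Y.cells ∧ (c.1, c.2 + 1) ∉ Y.cells then
    { cells := Y.cells.erase c,
      isLowerSet := by
        intro a b hba ha
        rw [Finset.coe_erase, Set.mem_diff] at ha ⊢
        refine ⟨Y.isLowerSet hba ha.1, ?_⟩
        rintro rfl
        rcases lt_or_eq_of_le hba with hlt | rfl
        · rcases Prod.lt_iff.mp hlt with ⟨h1, h2⟩ | ⟨h1, h2⟩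
          · exact h.1 (Y.isLowerSet (Prod.mk_le_mk.mpr ⟨h1, h2⟩) ha.1)
          · exact h.2 (Y.isLowerSet (Prod.mk_le_mk.mpr ⟨h1, h2⟩) ha.1)
        · exact ha.2 rfl }
  else Y

end

/-!
Write `r i` for the length of row `i` and `c □` for the content of `□`. Every function `f` of the
content satisfies

  `∑_{□ addable} f (c □) - ∑_{□ removable} f (c □)`
    `= f 0 + ∑_{□ ∈ Y} (f (c □ + 1) - 2 f (c □) + f (c □ - 1))`.

Indeed, the square just past the end of row `k + 1` fails to be addable exactly when
`r (k+1) = r k`, which is also exactly when the last square of row `k` fails to be removable; these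
two squares then lie on one diagonal, so they have the same content. Hence the left-hand side may be
summed over all row ends, addable or removable or not, and it then agrees with the right-hand side
because second differences telescope along each row. For `f x = (z + x) (z' + x)` the second
difference is the constant `2`.
-/

lemma rowLen_pos_iff_lt_colLen_zero (Y : YoungDiagram) (i : ℕ) :
    0 < Y.rowLen i ↔ i < Y.colLen 0 := by
  rw [← YoungDiagram.mem_iff_lt_rowLen, YoungDiagram.mem_iff_lt_colLen]

lemma rowLen_colLen_zero (Y : YoungDiagram) : Y.rowLen (Y.colLen 0) = 0 := by
  simpa using rowLen_pos_iff_lt_colLen_zero Y (Y.colLen 0)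

lemma forall_lt_mk_rowLen_mem_iff (Y : YoungDiagram) (i : ℕ) :
    (∀ d : ℕ × ℕ, d ≤ (i, Y.rowLen i) → d ≠ (i, Y.rowLen i) → d ∈ Y.cells) ↔
      i = 0 ∨ Y.rowLen i < Y.rowLen (i - 1) := by
  simp only [YoungDiagram.mem_cells]
  constructor
  · intro below
    refine i.eq_zero_or_pos.imp_right fun hi => ?_
    exact YoungDiagram.mem_iff_lt_rowLen.mp <|
      below (i - 1, Y.rowLen i) (Prod.mk_le_mk.mpr ⟨i.sub_le 1, le_rfl⟩) fun h =>
        (Nat.sub_lt hi one_pos).ne (congrArg Prod.fst h)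
  · rintro hi ⟨a, b⟩ hle hne
    obtain ⟨hai, hb⟩ := Prod.mk_le_mk.mp hle
    rw [YoungDiagram.mem_iff_lt_rowLen]
    rcases hai.eq_or_lt with rfl | hai
    · exact hb.lt_of_ne fun hb => hne (by rw [hb])
    · have hanti := Y.rowLen_anti a (i - 1) (by lia)
      lia

section AddCommMonoid

variable {M : Type*} [AddCommMonoid M] (Y : YoungDiagram) (g : ℕ × ℕ → M)

lemma sum_cells_eq_sum_rows :
    ∑ c ∈ Y.cells, g c =
      ∑ i ∈ Finset.range (Y.colLen 0), ∑ j ∈ Finset.range (Y.rowLen i), g (i, j) := by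
  refine Finset.sum_finset_product _ _ _ fun ⟨i, j⟩ => ?_
  rw [YoungDiagram.mem_cells, YoungDiagram.mem_iff_lt_rowLen, Finset.mem_range, Finset.mem_range,
    ← rowLen_pos_iff_lt_colLen_zero]
  lia

lemma sum_addables_eq_sum_rows :
    ∑ c ∈ addables Y, g c = g (0, Y.rowLen 0) +
      ∑ i ∈ Finset.range (Y.colLen 0) with Y.rowLen (i + 1) < Y.rowLen i,
        g (i + 1, Y.rowLen (i + 1)) := by
  rw [addables, Finset.sum_filter, Finset.sum_image fun _ _ _ _ h => congrArg Prod.fst h,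
    Finset.sum_range_succ', Finset.sum_filter, add_comm]
  simp only [forall_lt_mk_rowLen_mem_iff, Nat.add_one_ne_zero, false_or, true_or, if_true,
    Nat.add_sub_cancel]

lemma removables_eq_image :
    removables Y = ((Finset.range (Y.colLen 0)).filter
      fun i => Y.rowLen (i + 1) < Y.rowLen i).image fun i => (i, Y.rowLen i - 1) := by
  ext ⟨i, j⟩
  simp only [removables, Finset.mem_filter, Finset.mem_image, YoungDiagram.mem_cells,
    YoungDiagram.mem_iff_lt_rowLen, Finset.mem_range, ← rowLen_pos_iff_lt_colLen_zero,
    Prod.mk.injEq]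
  constructor
  · rintro ⟨hj, hbelow, hright⟩
    exact ⟨i, ⟨by lia, by lia⟩, rfl, by lia⟩
  · rintro ⟨i, ⟨hpos, hlt⟩, rfl, rfl⟩
    exact ⟨by lia, by lia, by lia⟩

lemma sum_removables_eq_sum_rows :
    ∑ c ∈ removables Y, g c =
      ∑ i ∈ Finset.range (Y.colLen 0) with Y.rowLen (i + 1) < Y.rowLen i,
        g (i, Y.rowLen i - 1) := by
  rw [removables_eq_image, Finset.sum_image fun _ _ _ _ h => congrArg Prod.fst h]

end AddCommMonoid

section AddCommGroup

variable {M : Type*} [AddCommGroup M]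

lemma sum_range_second_difference {A : Type*} [AddGroupWithOne A] (f : A → M) (a : A) (n : ℕ) :
    ∑ j ∈ Finset.range n, (f (a + j + 1) - 2 • f (a + j) + f (a + j - 1)) =
      f (a + n) - f (a + n - 1) - (f a - f (a - 1)) := by
  have telescope := Finset.sum_range_sub (fun j : ℕ => f (a + j) - f (a + j - 1)) n
  simp only [Nat.cast_zero, add_zero] at telescope
  rw [← telescope]
  refine Finset.sum_congr rfl fun j _ => ?_
  rw [Nat.cast_succ, ← add_assoc, add_sub_cancel_right, two_nsmul]
  abel

variable (f : ℤ → M) (Y : YoungDiagram)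

lemma sum_addables_sub_sum_removables_eq_sum_rows :
    ∑ c ∈ addables Y, f (cellContent c) - ∑ c ∈ removables Y, f (cellContent c) =
      f (Y.rowLen 0) + ∑ i ∈ Finset.range (Y.colLen 0),
        (f (Y.rowLen (i + 1) - (i + 1)) - f (Y.rowLen i - i - 1)) := by
  have cancel : ∀ i ∈ Finset.range (Y.colLen 0),
      f (Y.rowLen (i + 1) - (i + 1)) - f (Y.rowLen i - i - 1) ≠ 0 →
        Y.rowLen (i + 1) < Y.rowLen i := by
    intro i _ hne
    refine (Y.rowLen_anti i (i + 1) i.le_succ).lt_of_ne fun heq => hne ?_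
    rw [heq, sub_sub, sub_self]
  rw [sum_addables_eq_sum_rows, sum_removables_eq_sum_rows, add_sub_assoc,
    ← Finset.sum_sub_distrib, ← Finset.sum_filter_of_ne cancel]
  refine congrArg₂ (· + ·) ?_ ?_
  · simp only [cellContent, Nat.cast_zero, sub_zero]
  · refine Finset.sum_congr rfl fun i hi => ?_
    have hlt := (Finset.mem_filter.mp hi).2
    have last : cellContent (i, Y.rowLen i - 1) = Y.rowLen i - i - 1 := by
      simp only [cellContent]
      lia
    rw [last, cellContent, Nat.cast_succ]

lemma sum_cells_second_difference :
    ∑ c ∈ Y.cells,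
        (f (cellContent c + 1) - 2 • f (cellContent c) + f (cellContent c - 1)) =
      f (Y.rowLen 0) - f 0 + ∑ i ∈ Finset.range (Y.colLen 0),
        (f (Y.rowLen (i + 1) - (i + 1)) - f (Y.rowLen i - i - 1)) := by
  have telescope := Finset.sum_range_sub' (fun i : ℕ => f (Y.rowLen i - i) - f (-i)) (Y.colLen 0)
  simp only [rowLen_colLen_zero, Nat.cast_zero, neg_zero, sub_zero, zero_sub, sub_self] at telescope
  have row (i : ℕ) : ∑ j ∈ Finset.range (Y.rowLen i),
      (f (cellContent (i, j) + 1) - 2 • f (cellContent (i, j)) + f (cellContent (i, j) - 1)) =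
        f (Y.rowLen i - i) - f (Y.rowLen i - i - 1) - (f (-i) - f (-i - 1)) := by
    simpa only [cellContent, neg_add_eq_sub] using sum_range_second_difference f (-i) (Y.rowLen i)
  rw [sum_cells_eq_sum_rows, ← telescope, ← Finset.sum_add_distrib]
  refine Finset.sum_congr rfl fun i _ => ?_
  rw [row, Nat.cast_succ, neg_add']
  abel

theorem sum_addables_sub_sum_removables_eq_add_sum_second_difference :
    ∑ c ∈ addables Y, f (cellContent c) - ∑ c ∈ removables Y, f (cellContent c) =
      f 0 + ∑ c ∈ Y.cells,
        (f (cellContent c + 1) - 2 • f (cellContent c) + f (cellContent c - 1)) := by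
  rw [sum_addables_sub_sum_removables_eq_sum_rows, sum_cells_second_difference]
  abel

end AddCommGroup

theorem sum_addable_sub_sum_removable_general {R : Type*} [NonAssocRing R] (Y : YoungDiagram)
    (z z' : R) :
    (∑ c ∈ addables Y, (z + cellContent c) * (z' + cellContent c)) -
      (∑ c ∈ removables Y, (z + cellContent c) * (z' + cellContent c)) =
      z * z' + 2 * (Y.card : R) := by
  have second_difference (x : ℤ) :
      (z + (x + 1 : ℤ)) * (z' + (x + 1 : ℤ)) - 2 • ((z + x) * (z' + x)) +
        (z + (x - 1 : ℤ)) * (z' + (x - 1 : ℤ)) = 2 := by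
    push_cast
    simp only [mul_add, add_mul, mul_sub, sub_mul, mul_one, one_mul, ← one_add_one_eq_two (R := R)]
    abel
  rw [sum_addables_sub_sum_removables_eq_add_sum_second_difference
    fun x : ℤ => (z + x) * (z' + x), Finset.sum_congr rfl fun c _ => second_difference _]
  simp only [Finset.sum_const, Int.cast_zero, add_zero, nsmul_eq_mul, YoungDiagram.card,
    (Nat.cast_commute _ _).eq]

/-- For every partition `λ` and all `z, z' ∈ ℂ`:
`Σ_{□ addable to λ} (z + c(□))(z' + c(□)) − Σ_{□ removable from λ} (z + c(□))(z' + c(□))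
  = zz' + 2|λ|`. -/
theorem sum_addable_sub_sum_removable (Y : YoungDiagram) (z z' : ℂ) :
    (∑ c ∈ addables Y, (z + cellContent c) * (z' + cellContent c)) -
      (∑ c ∈ removables Y, (z + cellContent c) * (z' + cellContent c)) =
      z * z' + 2 * (Y.card : ℂ) :=
  sum_addable_sub_sum_removable_general Y z z'
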